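/- Let Γ be a finite extensive-form game with perfect recall. If behavioral strategy profiles β*, β̃* and a belief system μ* are such that (β*, β̃*, μ*) satisfies the Nash characterization, then β* is a Nash equilibrium in behavioral strategies, i.e. u^i(β*) ≥ u^i(β^i, β*^{-i}) for every player i ∈ N and every behavioral strategy β^i of player i. -/

import Mathlib

open scoped Classical

noncomputable section

/-- A finite extensive-form game.  Actions are labelled by natural numbers drawn from the
finite pool `actFinset`; a history is the list of actions taken so far; players are `Fin n`
and `P h = none` means that the chance player moves after `h`.  The information sets of
player `i` are `Info i j` for `j < m i`, and `infoIdx h` is the index of the information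
set containing a nonterminal history `h` at which some player moves.  Payoffs `u i h` are
relevant on terminal histories. -/
structure EFG where
  n : ℕ
  actFinset : Finset ℕ
  H : Finset (List ℕ)
  P : List ℕ → Option (Fin n)
  fc : List ℕ → ℕ → ℝ
  m : Fin n → ℕ
  Info : Fin n → ℕ → Finset (List ℕ)
  infoIdx : List ℕ → ℕ
  u : Fin n → List ℕ → ℝ
  empty_mem : ([] : List ℕ) ∈ H
  prefixClosed : ∀ h ∈ H, ∀ h' : List ℕ, h' <+: h → h' ∈ H
  act_mem : ∀ (h : List ℕ) (a : ℕ), h ++ [a] ∈ H → a ∈ actFinset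
  fc_nonneg : ∀ h a, 0 ≤ fc h a
  fc_sum : ∀ h ∈ H, P h = none → (∃ a, h ++ [a] ∈ H) →
    ∑ a ∈ actFinset.filter (fun a => h ++ [a] ∈ H), fc h a = 1
  info_spec : ∀ (i : Fin n) (j : ℕ) (h : List ℕ), j < m i →
    (h ∈ Info i j ↔ h ∈ H ∧ P h = some i ∧ (∃ a, h ++ [a] ∈ H) ∧ infoIdx h = j)
  infoIdx_lt : ∀ (i : Fin n), ∀ h ∈ H, P h = some i → (∃ a, h ++ [a] ∈ H) → infoIdx h < m i
  info_nonempty : ∀ (i : Fin n) (j : ℕ), j < m i → (Info i j).Nonempty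
  info_actions : ∀ (i : Fin n) (j : ℕ), j < m i → ∀ h ∈ Info i j, ∀ h' ∈ Info i j,
    ∀ a : ℕ, (h ++ [a] ∈ H ↔ h' ++ [a] ∈ H)
  act_unique : ∀ (h h' : List ℕ) (a : ℕ), h ∈ H → h' ∈ H → h ++ [a] ∈ H → h' ++ [a] ∈ H →
    P h = P h' ∧ infoIdx h = infoIdx h'

namespace EFG

/-- Behavioral strategy profiles (player, information-set index, action ↦ probability). -/
abbrev Profile (G : EFG) : Type := Fin G.n → ℕ → ℕ → ℝ

/-- Belief systems (player, information-set index, history ↦ probability). -/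
abbrev Belief (G : EFG) : Type := Fin G.n → ℕ → List ℕ → ℝ

variable (G : EFG)

/-- The set `Z` of terminal histories. -/
def Zset : Finset (List ℕ) := G.H.filter fun h => ∀ a : ℕ, h ++ [a] ∉ G.H

/-- The set `A(h)` of actions available after a history. -/
def A (h : List ℕ) : Finset ℕ := G.actFinset.filter fun a => h ++ [a] ∈ G.H

/-- The common action set `A(I_i^j)` of an information set. -/
def infoA (i : Fin G.n) (j : ℕ) : Finset ℕ := (G.Info i j).sup fun h => G.A h

/-- A behavioral strategy of player `i`: a probability distribution on `A(I_i^j)` for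
each information set `I_i^j`. -/
def IsBehStrategy (i : Fin G.n) (b : ℕ → ℕ → ℝ) : Prop :=
  ∀ j < G.m i, (∀ a ∈ G.infoA i j, 0 ≤ b j a) ∧ ∑ a ∈ G.infoA i j, b j a = 1

/-- A behavioral strategy profile. -/
def IsBehProfile (β : G.Profile) : Prop := ∀ i : Fin G.n, G.IsBehStrategy i (β i)

/-- The probability of action `a` at history `h`: the chance distribution if the chance
player moves, and the mover's behavioral strategy otherwise. -/
def moveProb (β : G.Profile) (h : List ℕ) (a : ℕ) : ℝ :=
  (G.P h).elim (G.fc h a) fun i => β i (G.infoIdx h) a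

/-- Player `i`'s record `X_i` of the information sets he encounters along a history and the
actions he takes at them, accumulated starting from the prefix `pre`. -/
def recordFrom (i : Fin G.n) : List ℕ → List ℕ → List (ℕ × ℕ)
  | _, [] => []
  | pre, b :: rest =>
    (if G.P pre = some i then [(G.infoIdx pre, b)] else []) ++ recordFrom i (pre ++ [b]) rest

/-- Perfect recall. -/
def PerfectRecall : Prop :=
  ∀ (i : Fin G.n) (j : ℕ), j < G.m i →
    ∀ h ∈ G.Info i j, ∀ h' ∈ G.Info i j, G.recordFrom i [] h = G.recordFrom i [] h'

/-- Product of the move probabilities along `rest`, continuing from the prefix `pre`. -/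
def prodAlong (β : G.Profile) : List ℕ → List ℕ → ℝ
  | _, [] => 1
  | pre, b :: rest => G.moveProb β pre b * prodAlong β (pre ++ [b]) rest

/-- `ω(h|β)`: the probability that the moves along `h` are played under `β`. -/
def omega (β : G.Profile) (h : List ℕ) : ℝ := G.prodAlong β [] h

/-- `ω(I_i^j|β)`. -/
def omegaInfo (i : Fin G.n) (j : ℕ) (β : G.Profile) : ℝ := ∑ h ∈ G.Info i j, G.omega β h

/-- Product of the move probabilities along `rest` from `pre`, disregarding player `i`'s
own moves. -/
def prodAlongNot (i : Fin G.n) (β : G.Profile) : List ℕ → List ℕ → ℝ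
  | _, [] => 1
  | pre, b :: rest =>
    (if G.P pre = some i then 1 else G.moveProb β pre b) * prodAlongNot i β (pre ++ [b]) rest

/-- `S^i(h|β)`: probability of the moves along `h`, disregarding player `i`'s own moves. -/
def Sh (i : Fin G.n) (β : G.Profile) (h : List ℕ) : ℝ := G.prodAlongNot i β [] h

/-- `S^i(I_i^j|β)`. -/
def SInfo (i : Fin G.n) (j : ℕ) (β : G.Profile) : ℝ := ∑ h ∈ G.Info i j, G.Sh i β h

/-- Product of the move probabilities along `rest` from `pre`, with the factor at prefixes
lying in `I_i^j` omitted. -/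
def prodAlongSkip (i : Fin G.n) (j : ℕ) (β : G.Profile) : List ℕ → List ℕ → ℝ
  | _, [] => 1
  | pre, b :: rest =>
    (if pre ∈ G.Info i j then 1 else G.moveProb β pre b) * prodAlongSkip i j β (pre ++ [b]) rest

/-- `q ∈ M(a, I_i^j)`: `I_i^q` is a first information set of player `i` after action `a`
(every history in `I_i^q` contains `a`, with no later action of `a` lying in any action set
of player `i`). -/
def FirstAfter (i : Fin G.n) (a : ℕ) (q : ℕ) : Prop :=
  q < G.m i ∧ ∀ h ∈ G.Info i q, ∃ l₁ l₂ : List ℕ,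
    h = l₁ ++ a :: l₂ ∧ ∀ b ∈ l₂, ∀ p < G.m i, b ∉ G.infoA i p

/-- `q ∈ M(I_i^j) = ∪_{a ∈ A(I_i^j)} M(a, I_i^j)`. -/
def MInfo (i : Fin G.n) (j : ℕ) (q : ℕ) : Prop := ∃ a ∈ G.infoA i j, G.FirstAfter i a q

/-- `q ∈ Λ(a, I_i^j)`: every history in `I_i^q` contains the action `a`. -/
def LambdaSet (i : Fin G.n) (a : ℕ) (q : ℕ) : Prop :=
  q < G.m i ∧ ∀ h ∈ G.Info i q, ∃ l₁ l₂ : List ℕ, h = l₁ ++ a :: l₂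

/-- `ϱ^i_{I_i^j}(β, β̃)`: replace player `i`'s component of `β` by that of `β̃` at every
information set `I_i^q` such that some history in `I_i^q` contains an action of `A(I_i^j)`. -/
def rho (i : Fin G.n) (j : ℕ) (β βt : G.Profile) : G.Profile := fun p q =>
  if p = i ∧ ∃ h ∈ G.Info i q, ∃ b ∈ h, b ∈ G.infoA i j then βt i q else β p q

/-- A belief system: a probability distribution on each information set. -/
def IsBelief (μ : G.Belief) : Prop :=
  ∀ (i : Fin G.n) (j : ℕ), j < G.m i →
    (∀ h ∈ G.Info i j, 0 ≤ μ i j h) ∧ ∑ h ∈ G.Info i j, μ i j h = 1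

/-- A self-independent belief system for `β`:
`S^i(I_i^j|β) · μ^i_{I_i^j}(h) = S^i(h|β)`. -/
def SelfIndep (β : G.Profile) (μ : G.Belief) : Prop :=
  ∀ (i : Fin G.n) (j : ℕ), j < G.m i → ∀ h ∈ G.Info i j,
    G.SInfo i j β * μ i j h = G.Sh i β h

/-- Auxiliary for `ν`: scan `rest` from `pre` for the subhistory lying in `I_i^j`, then
weight by the belief and multiply the move probabilities of the remaining moves (the move
taken at the subhistory itself being skipped). -/
def nuAux (i : Fin G.n) (j : ℕ) (β : G.Profile) (w : List ℕ → ℝ) : List ℕ → List ℕ → ℝ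
  | _, [] => 0
  | pre, b :: rest =>
    if pre ∈ G.Info i j then w pre * G.prodAlong β (pre ++ [b]) rest
    else nuAux i j β w (pre ++ [b]) rest

/-- `ν^i_{I_i^j}(h | a, β^{-I_i^j}, μ)` (it does not involve the component of `β` at
`I_i^j`). -/
def nu (i : Fin G.n) (j : ℕ) (β : G.Profile) (μ : G.Belief) (h : List ℕ) : ℝ :=
  G.nuAux i j β (μ i j) [] h

/-- `u^i((a, β^{-I_i^j}) ∧ I_i^j)`. -/
def uWedgeAct (i : Fin G.n) (j : ℕ) (a : ℕ) (β : G.Profile) : ℝ :=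
  ∑ h ∈ G.Zset.filter (fun h => a ∈ h), G.u i h * G.prodAlongSkip i j β [] h

/-- `u^i(β ∧ I_i^j)`. -/
def uWedge (i : Fin G.n) (j : ℕ) (β : G.Profile) : ℝ :=
  ∑ h ∈ G.Zset.filter (fun h => ∃ b ∈ h, b ∈ G.infoA i j), G.u i h * G.omega β h

/-- The conditional expected payoff `u^i(a, β^{-I_i^j}, μ | I_i^j)`. -/
def uCond (i : Fin G.n) (j : ℕ) (a : ℕ) (β : G.Profile) (μ : G.Belief) : ℝ :=
  ∑ h ∈ G.Zset.filter (fun h => a ∈ h), G.u i h * G.nu i j β μ h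

/-- The expected payoff `u^i(β)`. -/
def uExp (i : Fin G.n) (β : G.Profile) : ℝ := ∑ h ∈ G.Zset, G.u i h * G.omega β h

/-- The profile obtained from `β` by replacing all of player `i`'s components by `b`. -/
def replace (β : G.Profile) (i : Fin G.n) (b : ℕ → ℕ → ℝ) : G.Profile :=
  fun p => if p = i then b else β p

/-- `β` is a Nash equilibrium in behavioral strategies. -/
def IsNash (β : G.Profile) : Prop :=
  G.IsBehProfile β ∧ ∀ (i : Fin G.n) (b : ℕ → ℕ → ℝ), G.IsBehStrategy i b →
    G.uExp i (G.replace β i b) ≤ G.uExp i β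

/-- `(β, β̃, μ)` satisfies the Nash characterization (Definition 2 of the paper). -/
def NashChar (β βt : G.Profile) (μ : G.Belief) : Prop :=
  (∀ (i : Fin G.n) (j : ℕ), j < G.m i → ∀ a' ∈ G.infoA i j, ∀ a'' ∈ G.infoA i j,
    G.uWedgeAct i j a' (G.rho i j β βt) < G.uWedgeAct i j a'' (G.rho i j β βt) →
    β i j a' = 0) ∧
  (∀ (i : Fin G.n) (j : ℕ), j < G.m i → ∀ a' ∈ G.infoA i j, ∀ a'' ∈ G.infoA i j,
    G.uCond i j a' (G.rho i j β βt) μ < G.uCond i j a'' (G.rho i j β βt) μ →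
    βt i j a' = 0) ∧
  G.IsBelief μ ∧ G.SelfIndep β μ

/-- `r` is the root of a subgame: every information set lies entirely inside or entirely
outside the set of histories extending `r`. -/
def IsSubgameRoot (r : List ℕ) : Prop :=
  r ∈ G.H ∧ ∀ (i : Fin G.n) (j : ℕ), j < G.m i →
    (∀ h ∈ G.Info i j, r <+: h) ∨ ∀ h ∈ G.Info i j, ¬ r <+: h

/-- The depth `g` of the smallest subgame containing `A(I_i^j)` (the length of the longest
subgame root preceding every history of `I_i^j`). -/
def sgDepthInfo (i : Fin G.n) (j : ℕ) : ℕ :=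
  (G.H.filter fun r => G.IsSubgameRoot r ∧ ∀ h ∈ G.Info i j, r <+: h).sup List.length

/-- The depth `q(h)` of the smallest subgame containing the last action of `h`. -/
def sgDepthHist (h : List ℕ) : ℕ :=
  (G.H.filter fun r => G.IsSubgameRoot r ∧ r <+: h.dropLast).sup List.length

/-- `C^i_{I_i^j}(h|β)`: product of move probabilities along `h` within the smallest subgame
containing `A(I_i^j)`. -/
def Ch (i : Fin G.n) (j : ℕ) (β : G.Profile) (h : List ℕ) : ℝ :=
  G.prodAlong β (h.take (G.sgDepthInfo i j)) (h.drop (G.sgDepthInfo i j))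

/-- `C^i_{I_i^j}(I_i^j|β)`. -/
def CInfo (i : Fin G.n) (j : ℕ) (β : G.Profile) : ℝ := ∑ h ∈ G.Info i j, G.Ch i j β h

/-- `u^i((a, β^{-I_i^j}) ⋄ I_i^j)`. -/
def uDiamondAct (i : Fin G.n) (j : ℕ) (a : ℕ) (β : G.Profile) : ℝ :=
  ∑ h ∈ G.Zset.filter (fun h => a ∈ h), G.u i h *
    G.prodAlongSkip i j β (h.take (G.sgDepthInfo i j)) (h.drop (G.sgDepthInfo i j))

/-- `Y^i(h|β)`: like `S^i(h|β)` but within the smallest subgame containing the last action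
of `h`. -/
def Yh (i : Fin G.n) (β : G.Profile) (h : List ℕ) : ℝ :=
  G.prodAlongNot i β (h.take (G.sgDepthHist h)) (h.drop (G.sgDepthHist h))

/-- `Y^i(I_i^j|β)`. -/
def YInfo (i : Fin G.n) (j : ℕ) (β : G.Profile) : ℝ := ∑ h ∈ G.Info i j, G.Yh i β h

/-- The belief condition `Y^i(I_i^j|β) · μ^i_{I_i^j}(h) = Y^i(h|β)`. -/
def YConsistent (β : G.Profile) (μ : G.Belief) : Prop :=
  ∀ (i : Fin G.n) (j : ℕ), j < G.m i → ∀ h ∈ G.Info i j,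
    G.YInfo i j β * μ i j h = G.Yh i β h

/-- The expected payoff of player `i` in the subgame rooted at `r` (payoffs of terminal
histories extending `r`, weighted by the move probabilities within the subgame). -/
def uExpFrom (i : Fin G.n) (β : G.Profile) (r : List ℕ) : ℝ :=
  ∑ h ∈ G.Zset.filter (fun h => r <+: h), G.u i h * G.prodAlong β r (h.drop r.length)

/-- `β` is a subgame perfect equilibrium in behavioral strategies: its restriction to every
subgame is a Nash equilibrium in behavioral strategies of that subgame. -/
def IsSubgamePerfect (β : G.Profile) : Prop :=
  G.IsBehProfile β ∧ ∀ r : List ℕ, G.IsSubgameRoot r →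
    ∀ (i : Fin G.n) (b : ℕ → ℕ → ℝ), G.IsBehStrategy i b →
      G.uExpFrom i (G.replace β i b) r ≤ G.uExpFrom i β r

/-- `(β, β̃, μ)` satisfies the subgame perfect characterization (Definition 6 of the
paper). -/
def SubgameChar (β βt : G.Profile) (μ : G.Belief) : Prop :=
  (∀ (i : Fin G.n) (j : ℕ), j < G.m i → ∀ a' ∈ G.infoA i j, ∀ a'' ∈ G.infoA i j,
    G.uDiamondAct i j a' (G.rho i j β βt) < G.uDiamondAct i j a'' (G.rho i j β βt) →
    β i j a' = 0) ∧
  (∀ (i : Fin G.n) (j : ℕ), j < G.m i → ∀ a' ∈ G.infoA i j, ∀ a'' ∈ G.infoA i j,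
    G.uCond i j a' (G.rho i j β βt) μ < G.uCond i j a'' (G.rho i j β βt) μ →
    βt i j a' = 0) ∧
  G.IsBelief μ ∧ G.YConsistent β μ

/-- `(β, μ)` is a semi-sequential equilibrium. -/
def SemiSeqEq (β : G.Profile) (μ : G.Belief) : Prop :=
  G.IsBehProfile β ∧ G.IsBelief μ ∧ G.SelfIndep β μ ∧
  ∀ (i : Fin G.n) (j : ℕ), j < G.m i → ∀ a' ∈ G.infoA i j, ∀ a'' ∈ G.infoA i j,
    G.uCond i j a' β μ < G.uCond i j a'' β μ → β i j a' = 0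

/-- `(β, μ)` is a subgame perfect semi-sequential equilibrium. -/
def SubgameSemiSeqEq (β : G.Profile) (μ : G.Belief) : Prop :=
  G.IsBehProfile β ∧ G.IsBelief μ ∧ G.YConsistent β μ ∧
  ∀ (i : Fin G.n) (j : ℕ), j < G.m i → ∀ a' ∈ G.infoA i j, ∀ a'' ∈ G.infoA i j,
    G.uCond i j a' β μ < G.uCond i j a'' β μ → β i j a' = 0

/-- `d(I_i^j)`: the number of information sets of player `i` containing a prefix of some
history of `I_i^j` (counting `I_i^j` itself). -/
def dInfo (i : Fin G.n) (j : ℕ) : ℕ :=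
  ((Finset.range (G.m i)).filter
    (fun q => ∃ h ∈ G.Info i j, ∃ p : List ℕ, p <+: h ∧ p ∈ G.Info i q)).card

end EFG

/-!
Fix the play of the opponents and let `V j a` be the counterfactual value of `a` at `I_i^j`: the
payoff of taking `a` there and continuing with `β̃^i`, weighted by `S^i`. By perfect recall, player
`i`'s own moves contribute the same factor `w j` to every history of `I_i^j`, and telescoping over
the tree gives, for every strategy `b` and with `w` computed from `b`,
`u^i(b, β^{-i}) - u^i(β̃^i, β^{-i}) = ∑ j, w j * ∑ a, (b j a - β̃ j a) * V j a`.

The conditional payoff in (ii), multiplied by `S^i(I_i^j)`, is `V j`, so `β̃^i` plays only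
maximizers of `V j` (which vanishes if `S^i(I_i^j) = 0`), and no `b` beats `β̃^i`. The payoff in (i)
is `w j * V j` for `b = β^i`, so `β^i` plays only maximizers of `V j` wherever `w j > 0`; hence
`β^i` does at least as well as `β̃^i`.
-/

/-- The weights `q` vanish at the non-maximizers of `V` on `s`: the optimality requirement shared by
conditions (i) and (ii) of the Nash characterization. -/
def SupportedOnArgmax {ι R : Type*} [LT R] [Zero R] (s : Finset ι) (q V : ι → R) : Prop :=
  ∀ a' ∈ s, ∀ a'' ∈ s, V a' < V a'' → q a' = 0

namespace SupportedOnArgmax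

variable {ι R : Type*} {s : Finset ι} {q V : ι → R}

theorem of_lt_imp_lt [LT R] [Zero R] {W : ι → R} (hq : SupportedOnArgmax s q V)
    (hWV : ∀ a' ∈ s, ∀ a'' ∈ s, W a' < W a'' → V a' < V a'') : SupportedOnArgmax s q W :=
  fun a' h' a'' h'' hlt => hq a' h' a'' h'' (hWV a' h' a'' h'' hlt)

theorem sum_mul_le [Semiring R] [LinearOrder R] [IsOrderedRing R] {p : ι → R}
    (hq : SupportedOnArgmax s q V) (hp : ∀ a ∈ s, 0 ≤ p a) (hpq : ∑ a ∈ s, p a = ∑ a ∈ s, q a) :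
    ∑ a ∈ s, p a * V a ≤ ∑ a ∈ s, q a * V a := by
  rcases s.eq_empty_or_nonempty with rfl | hs
  · simp
  obtain ⟨m, hm, hmax⟩ := s.exists_max_image V hs
  calc ∑ a ∈ s, p a * V a ≤ ∑ a ∈ s, p a * V m :=
        Finset.sum_le_sum fun a ha => mul_le_mul_of_nonneg_left (hmax a ha) (hp a ha)
    _ = ∑ a ∈ s, q a * V m := by rw [← Finset.sum_mul, hpq, Finset.sum_mul]
    _ = ∑ a ∈ s, q a * V a := Finset.sum_congr rfl fun a ha => by
        rcases (hmax a ha).lt_or_eq with hlt | heq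
        · simp [hq a ha m hm hlt]
        · rw [heq]

end SupportedOnArgmax

namespace EFG

/-- The moves along the path `l` starting at `pre`, each as a pair (prefix reached, action taken).
The recursive definitions of `prodAlong`, `prodAlongSkip` and `recordFrom` are all maps over this
list. -/
def steps {α : Type*} : List α → List α → List (List α × α)
  | _, [] => []
  | pre, b :: l => (pre, b) :: steps (pre ++ [b]) l

section Steps

variable {α : Type*}

theorem steps_append (pre l₁ l₂ : List α) :
    steps pre (l₁ ++ l₂) = steps pre l₁ ++ steps (pre ++ l₁) l₂ := by
  induction l₁ generalizing pre with
  | nil => simp [steps]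
  | cons b l ih => simp [steps, ih]

theorem mem_steps {pre l : List α} {s : List α × α} :
    s ∈ steps pre l ↔ pre <+: s.1 ∧ s.1 ++ [s.2] <+: pre ++ l := by
  constructor
  · induction l generalizing pre with
    | nil => simp [steps]
    | cons b l ih =>
      rintro (_ | ⟨_, hs⟩)
      · simp
      · obtain ⟨hpre, hl⟩ := ih hs
        exact ⟨(List.prefix_append _ _).trans hpre, by simpa using hl⟩
  · obtain ⟨p, c⟩ := s
    rintro ⟨⟨t, rfl⟩, ⟨r, hr⟩⟩
    obtain rfl : l = t ++ c :: r := by simpa using hr.symm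
    simp [steps_append, steps]

theorem prefix_iff_eq_or_concat_prefix {h z : List α} :
    h <+: z ↔ h = z ∨ ∃ a, h ++ [a] <+: z := by
  constructor
  · rintro ⟨_ | ⟨a, r⟩, rfl⟩
    · simp
    · exact .inr ⟨a, r, by simp⟩
  · rintro (rfl | ⟨a, ha⟩)
    · exact List.prefix_rfl
    · exact (List.prefix_append h [a]).trans ha

theorem eq_of_concat_prefix {h z : List α} {a b : α} (ha : h ++ [a] <+: z) (hb : h ++ [b] <+: z) :
    a = b := by
  have heq := (List.prefix_of_prefix_length_le ha hb (by simp)).eq_of_length (by simp)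
  simpa using heq

end Steps

variable {G : EFG} {i : Fin G.n} {j : ℕ}

theorem mem_A {h : List ℕ} {a : ℕ} : a ∈ G.A h ↔ h ++ [a] ∈ G.H := by
  simp only [A, Finset.mem_filter, and_iff_right_iff_imp]
  exact G.act_mem h a

theorem A_eq_infoA (hj : j < G.m i) {h : List ℕ} (hh : h ∈ G.Info i j) :
    G.A h = G.infoA i j := by
  ext a
  simp only [infoA, Finset.mem_sup, mem_A]
  exact ⟨fun ha => ⟨h, hh, ha⟩, fun ⟨g, hg, ha⟩ => (G.info_actions i j hj h hh g hg a).2 ha⟩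

theorem infoIdx_lt_and_mem_Info {h : List ℕ} {a : ℕ} (ha : h ++ [a] ∈ G.H)
    (hP : G.P h = some i) : G.infoIdx h < G.m i ∧ h ∈ G.Info i (G.infoIdx h) := by
  have hH : h ∈ G.H := G.prefixClosed _ ha _ (List.prefix_append _ _)
  have hlt := G.infoIdx_lt i h hH hP ⟨a, ha⟩
  exact ⟨hlt, (G.info_spec i _ h hlt).2 ⟨hH, hP, ⟨a, ha⟩, rfl⟩⟩

theorem mem_Info_of_mem_infoA (hj : j < G.m i) {h : List ℕ} {a : ℕ} (ha : h ++ [a] ∈ G.H)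
    (haj : a ∈ G.infoA i j) : h ∈ G.Info i j := by
  have hH : h ∈ G.H := G.prefixClosed _ ha _ (List.prefix_append _ _)
  obtain ⟨g, hg⟩ := G.info_nonempty i j hj
  rw [← A_eq_infoA hj hg, mem_A] at haj
  obtain ⟨gH, gP, _, gI⟩ := (G.info_spec i j g hj).1 hg
  obtain ⟨hP, hI⟩ := G.act_unique h g a hH gH ha haj
  exact (G.info_spec i j h hj).2 ⟨hH, hP.trans gP, ⟨a, ha⟩, hI.trans gI⟩

theorem exists_concat_prefix_of_mem (hj : j < G.m i) {z : List ℕ} (hz : z ∈ G.H) {a : ℕ}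
    (ha : a ∈ z) (haj : a ∈ G.infoA i j) : ∃ h ∈ G.Info i j, h ++ [a] <+: z := by
  obtain ⟨h, r, rfl⟩ := List.append_of_mem ha
  have hpre : h ++ [a] <+: h ++ a :: r := ⟨r, by simp⟩
  exact ⟨h, mem_Info_of_mem_infoA hj (G.prefixClosed _ hz _ hpre) haj, hpre⟩

theorem recordFrom_eq_map_steps (i : Fin G.n) (pre l : List ℕ) :
    G.recordFrom i pre l =
      ((steps pre l).filter fun s => G.P s.1 = some i).map fun s => (G.infoIdx s.1, s.2) := by
  induction l generalizing pre with
  | nil => rfl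
  | cons b l ih => by_cases hP : G.P pre = some i <;> simp [recordFrom, steps, ih, hP]

theorem mem_recordFrom_nil {h : List ℕ} {x : ℕ × ℕ} :
    x ∈ G.recordFrom i [] h ↔
      ∃ p, p ++ [x.2] <+: h ∧ G.P p = some i ∧ G.infoIdx p = x.1 := by
  obtain ⟨q, c⟩ := x
  simp [recordFrom_eq_map_steps, mem_steps, and_assoc]

namespace PerfectRecall

theorem eq_of_prefix (hPR : G.PerfectRecall) (hj : j < G.m i) {h h' : List ℕ}
    (hh : h ∈ G.Info i j) (hh' : h' ∈ G.Info i j) (hpre : h <+: h') : h = h' := by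
  obtain ⟨_ | ⟨c, r⟩, rfl⟩ := hpre
  · simp
  · have hP := ((G.info_spec i j h hj).1 hh).2.1
    have hlen := congrArg List.length (hPR i j hj _ hh' _ hh)
    simp [recordFrom_eq_map_steps, steps_append, steps, hP] at hlen

theorem not_mem_Info_of_concat_prefix (hPR : G.PerfectRecall) (hj : j < G.m i) {p h : List ℕ}
    {c : ℕ} (hh : h ∈ G.Info i j) (hpre : p ++ [c] <+: h) : p ∉ G.Info i j := by
  intro hp
  obtain rfl := hPR.eq_of_prefix hj hp hh ((List.prefix_append _ _).trans hpre)
  simpa using hpre.length_le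

theorem not_mem_infoA (hPR : G.PerfectRecall) (hj : j < G.m i) {h : List ℕ}
    (hh : h ∈ G.Info i j) {b : ℕ} (hb : b ∈ h) : b ∉ G.infoA i j := by
  intro hbj
  obtain ⟨k, hk, hpre⟩ :=
    exists_concat_prefix_of_mem hj ((G.info_spec i j h hj).1 hh).1 hb hbj
  exact hPR.not_mem_Info_of_concat_prefix hj hh hpre hk

theorem mem_of_mem (hPR : G.PerfectRecall) {q : ℕ} (hj : j < G.m i) (hq : q < G.m i)
    {g h : List ℕ} (hg : g ∈ G.Info i q) (hh : h ∈ G.Info i q) {b : ℕ} (hb : b ∈ g)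
    (hbj : b ∈ G.infoA i j) : b ∈ h := by
  obtain ⟨k, hk, hpre⟩ :=
    exists_concat_prefix_of_mem hj ((G.info_spec i q g hq).1 hg).1 hb hbj
  obtain ⟨_, hP, _, hI⟩ := (G.info_spec i j k hj).1 hk
  have hrec : (j, b) ∈ G.recordFrom i [] g := mem_recordFrom_nil.2 ⟨k, hpre, hP, hI⟩
  rw [hPR i q hq g hg h hh] at hrec
  obtain ⟨p, hp, _⟩ := mem_recordFrom_nil.1 hrec
  exact hp.subset (by simp)

end PerfectRecall

section PathWeights

theorem prodAlong_eq_prod_steps (β : G.Profile) (pre l : List ℕ) :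
    G.prodAlong β pre l = ((steps pre l).map fun s => G.moveProb β s.1 s.2).prod := by
  induction l generalizing pre with
  | nil => rfl
  | cons b l ih => simp [prodAlong, steps, ih]

theorem prodAlongSkip_eq_prod_steps (i : Fin G.n) (j : ℕ) (β : G.Profile) (pre l : List ℕ) :
    G.prodAlongSkip i j β pre l =
      ((steps pre l).map fun s => if s.1 ∈ G.Info i j then 1 else G.moveProb β s.1 s.2).prod := by
  induction l generalizing pre with
  | nil => rfl
  | cons b l ih => simp [prodAlongSkip, steps, ih]

theorem prodAlong_congr {β γ : G.Profile} {pre l : List ℕ}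
    (hβγ : ∀ s ∈ steps pre l, G.moveProb β s.1 s.2 = G.moveProb γ s.1 s.2) :
    G.prodAlong β pre l = G.prodAlong γ pre l := by
  simp only [prodAlong_eq_prod_steps, List.map_congr_left hβγ]

theorem prodAlongSkip_eq_prodAlong (β : G.Profile) {pre l : List ℕ}
    (hs : ∀ s ∈ steps pre l, s.1 ∉ G.Info i j) :
    G.prodAlongSkip i j β pre l = G.prodAlong β pre l := by
  rw [prodAlongSkip_eq_prod_steps, prodAlong_eq_prod_steps]
  exact congrArg List.prod (List.map_congr_left fun s h => if_neg (hs s h))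

theorem nuAux_append_cons (β : G.Profile) (w : List ℕ → ℝ) {pre l : List ℕ} (a : ℕ) (r : List ℕ)
    (hs : ∀ s ∈ steps pre l, s.1 ∉ G.Info i j) (hl : pre ++ l ∈ G.Info i j) :
    G.nuAux i j β w pre (l ++ a :: r) = w (pre ++ l) * G.prodAlong β (pre ++ l ++ [a]) r := by
  induction l generalizing pre with
  | nil => simp_all [nuAux]
  | cons b l ih =>
    obtain ⟨hpre, hs⟩ := List.forall_mem_cons.1 hs
    simpa [nuAux, hpre] using ih hs (by simpa using hl)

theorem omega_concat (β : G.Profile) (h : List ℕ) (a : ℕ) :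
    G.omega β (h ++ [a]) = G.omega β h * G.moveProb β h a := by
  simp [omega, prodAlong_eq_prod_steps, steps_append, steps]

theorem PerfectRecall.prodAlongSkip_nil_append_cons (hPR : G.PerfectRecall) (hj : j < G.m i)
    (β : G.Profile) {h : List ℕ} (hh : h ∈ G.Info i j) (a : ℕ) (r : List ℕ) :
    G.prodAlongSkip i j β [] (h ++ a :: r) = G.omega β h * G.prodAlong β (h ++ [a]) r := by
  have hbefore : G.prodAlongSkip i j β [] h = G.omega β h :=
    prodAlongSkip_eq_prodAlong β fun s hs =>
      hPR.not_mem_Info_of_concat_prefix hj hh (mem_steps.1 hs).2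
  have hafter : G.prodAlongSkip i j β (h ++ [a]) r = G.prodAlong β (h ++ [a]) r :=
    prodAlongSkip_eq_prodAlong β fun s hs hsI =>
      hPR.not_mem_Info_of_concat_prefix hj hsI (mem_steps.1 hs).1 hh
  rw [← hbefore, ← hafter]
  simp [prodAlongSkip_eq_prod_steps, steps_append, steps, hh]

theorem PerfectRecall.nu_append_cons (hPR : G.PerfectRecall) (hj : j < G.m i) (β : G.Profile)
    (μ : G.Belief) {h : List ℕ} (hh : h ∈ G.Info i j) (a : ℕ) (r : List ℕ) :
    G.nu i j β μ (h ++ a :: r) = μ i j h * G.prodAlong β (h ++ [a]) r :=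
  nuAux_append_cons β (μ i j) a r
    (fun _ hs => hPR.not_mem_Info_of_concat_prefix hj hh (mem_steps.1 hs).2) hh

end PathWeights

section Replace

theorem replace_self (β : G.Profile) (i : Fin G.n) : G.replace β i (β i) = β := by
  funext p
  by_cases hp : p = i
  · simp [replace, hp]
  · simp [replace, hp]

theorem moveProb_replace_of_eq (β : G.Profile) (b : ℕ → ℕ → ℝ) {h : List ℕ} (a : ℕ)
    (hP : G.P h = some i) : G.moveProb (G.replace β i b) h a = b (G.infoIdx h) a := by
  simp [moveProb, hP, replace]

theorem moveProb_replace_of_ne (β : G.Profile) (b : ℕ → ℕ → ℝ) {h : List ℕ} (a : ℕ)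
    (hP : G.P h ≠ some i) : G.moveProb (G.replace β i b) h a = G.moveProb β h a := by
  cases hk : G.P h with
  | none => simp [moveProb, hk]
  | some k =>
    have hki : k ≠ i := fun hki => hP (hk.trans (congrArg some hki))
    simp [moveProb, hk, replace, hki]

theorem PerfectRecall.moveProb_rho (hPR : G.PerfectRecall) (hj : j < G.m i) (β βt : G.Profile)
    {p : List ℕ} {c : ℕ} (hpc : p ++ [c] ∈ G.H) :
    G.moveProb (G.rho i j β βt) p c =
      if ∃ b ∈ p, b ∈ G.infoA i j then G.moveProb (G.replace β i (βt i)) p c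
      else G.moveProb β p c := by
  by_cases hP : G.P p = some i
  · obtain ⟨hq, hp⟩ := infoIdx_lt_and_mem_Info hpc hP
    have hiff : (∃ h ∈ G.Info i (G.infoIdx p), ∃ b ∈ h, b ∈ G.infoA i j) ↔
        ∃ b ∈ p, b ∈ G.infoA i j :=
      ⟨fun ⟨_, hh, b, hb, hbj⟩ => ⟨b, hPR.mem_of_mem hj hq hh hp hb hbj, hbj⟩,
        fun hb => ⟨p, hp, hb⟩⟩
    rw [moveProb_replace_of_eq β _ c hP]
    simp only [moveProb, hP, Option.elim_some, rho, hiff, true_and]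
    split_ifs <;> rfl
  · rw [moveProb_replace_of_ne β _ c hP, ite_self]
    cases hk : G.P p with
    | none => simp [moveProb, hk]
    | some k =>
      have hki : k ≠ i := fun hki => hP (hk.trans (congrArg some hki))
      simp [moveProb, hk, rho, hki]

theorem PerfectRecall.omega_rho (hPR : G.PerfectRecall) (hj : j < G.m i) (β βt : G.Profile)
    {h : List ℕ} (hh : h ∈ G.Info i j) : G.omega (G.rho i j β βt) h = G.omega β h := by
  refine prodAlong_congr fun s hs => ?_
  have hpre : s.1 ++ [s.2] <+: h := (mem_steps.1 hs).2
  have hH := G.prefixClosed h ((G.info_spec i j h hj).1 hh).1 _ hpre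
  rw [hPR.moveProb_rho hj β βt hH, if_neg]
  rintro ⟨b, hb, hbj⟩
  exact hPR.not_mem_infoA hj hh (hpre.subset (List.mem_append_left _ hb)) hbj

theorem PerfectRecall.prodAlong_rho (hPR : G.PerfectRecall) (hj : j < G.m i) (β βt : G.Profile)
    {pre l : List ℕ} {a : ℕ} (hH : pre ++ l ∈ G.H) (ha : a ∈ pre) (haj : a ∈ G.infoA i j) :
    G.prodAlong (G.rho i j β βt) pre l = G.prodAlong (G.replace β i (βt i)) pre l := by
  refine prodAlong_congr fun s hs => ?_
  obtain ⟨hpre, hsl⟩ := mem_steps.1 hs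
  rw [hPR.moveProb_rho hj β βt (G.prefixClosed _ hH _ hsl), if_pos ⟨a, hpre.subset ha, haj⟩]

end Replace

section OwnMoves

/-- Player `i`'s own factor of `ω(h|β)` under the strategy `b`, complementary to `S^i(h|β)`.
Reading it off the record `X_i(h)` makes it constant on information sets under perfect recall. -/
def ownProb (i : Fin G.n) (b : ℕ → ℕ → ℝ) (h : List ℕ) : ℝ :=
  ((G.recordFrom i [] h).map fun x => b x.1 x.2).prod

/-- The realization weight of `I_i^j` under `b`: the value of `ownProb i b` at an arbitrary history
of `I_i^j`, which does not matter under perfect recall. -/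
def realizationWeight (i : Fin G.n) (b : ℕ → ℕ → ℝ) (j : ℕ) : ℝ :=
  ownProb i b (Classical.epsilon (· ∈ G.Info i j))

theorem prodAlong_replace (β : G.Profile) (i : Fin G.n) (b : ℕ → ℕ → ℝ) (pre l : List ℕ) :
    G.prodAlong (G.replace β i b) pre l =
      ((G.recordFrom i pre l).map fun x => b x.1 x.2).prod * G.prodAlongNot i β pre l := by
  induction l generalizing pre with
  | nil => simp [prodAlong, prodAlongNot, recordFrom]
  | cons c l ih =>
    by_cases hP : G.P pre = some i
    · simp [prodAlong, prodAlongNot, recordFrom, ih, hP, moveProb_replace_of_eq, mul_assoc]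
    · simp [prodAlong, prodAlongNot, recordFrom, ih, hP, moveProb_replace_of_ne, mul_left_comm]

theorem omega_replace (β : G.Profile) (i : Fin G.n) (b : ℕ → ℕ → ℝ) (h : List ℕ) :
    G.omega (G.replace β i b) h = ownProb i b h * G.Sh i β h :=
  prodAlong_replace β i b [] h

theorem PerfectRecall.ownProb_eq_realizationWeight (hPR : G.PerfectRecall) (hj : j < G.m i)
    (b : ℕ → ℕ → ℝ) {h : List ℕ} (hh : h ∈ G.Info i j) :
    ownProb i b h = realizationWeight i b j := by
  unfold realizationWeight ownProb
  rw [hPR i j hj h hh _ (Classical.epsilon_spec (p := (· ∈ G.Info i j)) ⟨h, hh⟩)]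

theorem PerfectRecall.omega_replace_eq (hPR : G.PerfectRecall) (hj : j < G.m i) (β : G.Profile)
    (b : ℕ → ℕ → ℝ) {h : List ℕ} (hh : h ∈ G.Info i j) :
    G.omega (G.replace β i b) h = realizationWeight i b j * G.Sh i β h := by
  rw [omega_replace, hPR.ownProb_eq_realizationWeight hj b hh]

theorem IsBehStrategy.apply_infoIdx_nonneg {b : ℕ → ℕ → ℝ} (hb : G.IsBehStrategy i b)
    {h : List ℕ} {a : ℕ} (ha : h ++ [a] ∈ G.H) (hP : G.P h = some i) :
    0 ≤ b (G.infoIdx h) a := by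
  obtain ⟨hlt, hI⟩ := infoIdx_lt_and_mem_Info ha hP
  exact (hb _ hlt).1 a (A_eq_infoA hlt hI ▸ mem_A.2 ha)

theorem IsBehStrategy.ownProb_nonneg {b : ℕ → ℕ → ℝ} (hb : G.IsBehStrategy i b) {h : List ℕ}
    (hH : h ∈ G.H) : 0 ≤ ownProb i b h := by
  refine List.prod_nonneg fun x hx => ?_
  obtain ⟨y, hy, rfl⟩ := List.mem_map.1 hx
  obtain ⟨p, hpre, hP, hI⟩ := mem_recordFrom_nil.1 hy
  exact hI ▸ hb.apply_infoIdx_nonneg (G.prefixClosed h hH _ hpre) hP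

theorem IsBehStrategy.realizationWeight_nonneg {b : ℕ → ℕ → ℝ} (hb : G.IsBehStrategy i b)
    (hj : j < G.m i) : 0 ≤ realizationWeight i b j :=
  have hmem := Classical.epsilon_spec (p := (· ∈ G.Info i j)) (G.info_nonempty i j hj)
  hb.ownProb_nonneg ((G.info_spec i j _ hj).1 hmem).1

theorem IsBehProfile.moveProb_nonneg {β : G.Profile} (hβ : G.IsBehProfile β) {h : List ℕ} {a : ℕ}
    (ha : h ++ [a] ∈ G.H) : 0 ≤ G.moveProb β h a := by
  cases hP : G.P h with
  | none => simpa [moveProb, hP] using G.fc_nonneg h a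
  | some k => simpa [moveProb, hP] using (hβ k).apply_infoIdx_nonneg ha hP

theorem IsBehProfile.prodAlongNot_nonneg {β : G.Profile} (hβ : G.IsBehProfile β) (i : Fin G.n)
    {pre l : List ℕ} (hH : pre ++ l ∈ G.H) : 0 ≤ G.prodAlongNot i β pre l := by
  induction l generalizing pre with
  | nil => exact zero_le_one
  | cons c l ih =>
    refine mul_nonneg ?_ (ih (by simpa using hH))
    split_ifs
    · exact zero_le_one
    · exact hβ.moveProb_nonneg (G.prefixClosed _ hH _ ⟨l, by simp⟩)

theorem IsBehProfile.SInfo_nonneg {β : G.Profile} (hβ : G.IsBehProfile β) (hj : j < G.m i) :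
    0 ≤ G.SInfo i j β :=
  Finset.sum_nonneg fun h hh => hβ.prodAlongNot_nonneg i ((G.info_spec i j h hj).1 hh).1

end OwnMoves

section PerformanceDifference

theorem sum_Zset_filter_prefix (G : EFG) (h : List ℕ) (f : List ℕ → ℝ) :
    ∑ z ∈ G.Zset with h <+: z, f z =
      (if h ∈ G.Zset then f h else 0) + ∑ a ∈ G.A h, ∑ z ∈ G.Zset with h ++ [a] <+: z, f z := by
  have hsplit : G.Zset.filter (h <+: ·) = G.Zset.filter (h = ·) ∪
      (G.A h).biUnion fun a => G.Zset.filter (h ++ [a] <+: ·) := by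
    ext z
    simp only [Finset.mem_union, Finset.mem_biUnion, Finset.mem_filter, mem_A]
    rw [prefix_iff_eq_or_concat_prefix]
    have hA : ∀ a, z ∈ G.Zset → h ++ [a] <+: z → h ++ [a] ∈ G.H := fun a hz =>
      G.prefixClosed z (Finset.mem_filter.1 hz).1 _
    grind
  have hdisj : Disjoint (G.Zset.filter (h = ·))
      ((G.A h).biUnion fun a => G.Zset.filter (h ++ [a] <+: ·)) := by
    simp only [Finset.disjoint_left, Finset.mem_biUnion, Finset.mem_filter]
    rintro z ⟨_, rfl⟩ ⟨a, _, _, ha⟩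
    simpa using ha.length_le
  rw [hsplit, Finset.sum_union hdisj, Finset.sum_filter, Finset.sum_ite_eq, Finset.sum_biUnion]
  intro a _ b _ hab
  exact Finset.disjoint_filter.2 fun z _ ha hb => hab (eq_of_concat_prefix ha hb)

theorem uExpFrom_eq_add_sum (i : Fin G.n) (σ : G.Profile) (h : List ℕ) :
    G.uExpFrom i σ h = (if h ∈ G.Zset then G.u i h else 0) +
      ∑ a ∈ G.A h, G.moveProb σ h a * G.uExpFrom i σ (h ++ [a]) := by
  unfold uExpFrom
  rw [sum_Zset_filter_prefix]
  congr 1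
  · simp [prodAlong]
  · refine Finset.sum_congr rfl fun a _ => ?_
    rw [Finset.mul_sum]
    refine Finset.sum_congr rfl fun z hz => ?_
    obtain ⟨r, rfl⟩ := (Finset.mem_filter.1 hz).2
    rw [List.drop_left, List.append_assoc, List.drop_left]
    simp only [List.singleton_append, prodAlong]
    ring

theorem uExpFrom_nil (i : Fin G.n) (σ : G.Profile) : G.uExpFrom i σ [] = G.uExp i σ := by
  simp [uExpFrom, uExp, omega]

theorem sum_H_sum_A (G : EFG) (f : List ℕ → ℝ) :
    ∑ h ∈ G.H, ∑ a ∈ G.A h, f (h ++ [a]) = ∑ g ∈ G.H.erase [], f g := by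
  rw [Finset.sum_sigma']
  refine Finset.sum_bij (fun x _ => x.1 ++ [x.2]) ?_ ?_ ?_ fun _ _ => rfl
  · rintro ⟨h, a⟩ hx
    simpa [mem_A] using (Finset.mem_sigma.1 hx).2
  · rintro ⟨h, a⟩ _ ⟨h', a'⟩ _ heq
    obtain ⟨rfl, ha⟩ := List.append_inj' heq rfl
    simpa using ha
  · intro g hg
    obtain ⟨hne, hH⟩ := Finset.mem_erase.1 hg
    have hconcat := List.dropLast_append_getLast hne
    refine ⟨⟨g.dropLast, g.getLast hne⟩, ?_, hconcat⟩
    simp only [Finset.mem_sigma, mem_A, hconcat]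
    exact ⟨G.prefixClosed g hH _ (List.dropLast_prefix g), hH⟩

theorem sum_omega_mul_sub (τ : G.Profile) (V : List ℕ → ℝ) :
    ∑ h ∈ G.H, G.omega τ h * (V h - ∑ a ∈ G.A h, G.moveProb τ h a * V (h ++ [a])) = V [] := by
  have hchildren : ∑ h ∈ G.H, ∑ a ∈ G.A h, G.omega τ h * (G.moveProb τ h a * V (h ++ [a])) =
      ∑ g ∈ G.H.erase [], G.omega τ g * V g := by
    simp only [← sum_H_sum_A G fun g => G.omega τ g * V g, omega_concat, mul_assoc]
  simp only [mul_sub, Finset.mul_sum, Finset.sum_sub_distrib]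
  rw [hchildren, ← Finset.add_sum_erase G.H _ G.empty_mem, add_sub_cancel_right]
  simp [omega, prodAlong]

theorem uExp_sub_uExp (i : Fin G.n) (τ σ : G.Profile) :
    G.uExp i τ - G.uExp i σ = ∑ h ∈ G.H, G.omega τ h *
      ∑ a ∈ G.A h, (G.moveProb τ h a - G.moveProb σ h a) * G.uExpFrom i σ (h ++ [a]) := by
  have hpayoff : ∑ h ∈ G.H, G.omega τ h * (if h ∈ G.Zset then G.u i h else 0) = G.uExp i τ := by
    have hZ : G.H.filter (· ∈ G.Zset) = G.Zset :=
      Finset.filter_mem_eq_inter.trans (Finset.inter_eq_right.2 (Finset.filter_subset _ _))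
    simp only [mul_ite, mul_zero, ← Finset.sum_filter, hZ, uExp, mul_comm]
  rw [← hpayoff, ← uExpFrom_nil, ← sum_omega_mul_sub τ (G.uExpFrom i σ), ← Finset.sum_sub_distrib]
  refine Finset.sum_congr rfl fun h _ => ?_
  rw [uExpFrom_eq_add_sum i σ h]
  simp only [sub_mul, Finset.sum_sub_distrib]
  ring

theorem sum_range_sum_Info (i : Fin G.n) (f : List ℕ → ℝ) :
    ∑ j ∈ Finset.range (G.m i), ∑ h ∈ G.Info i j, f h =
      ∑ h ∈ G.H with G.P h = some i ∧ ∃ a, h ++ [a] ∈ G.H, f h := by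
  rw [← Finset.sum_fiberwise_of_maps_to (g := G.infoIdx) (t := Finset.range (G.m i))]
  · refine Finset.sum_congr rfl fun j hj => Finset.sum_congr ?_ fun _ _ => rfl
    ext h
    simp [G.info_spec i j h (Finset.mem_range.1 hj), and_assoc]
  · intro h hh
    obtain ⟨hH, hP, ha⟩ := Finset.mem_filter.1 hh
    exact Finset.mem_range.2 (G.infoIdx_lt i h hH hP ha)

/-- The counterfactual value of the action `a` at `I_i^j`: the payoff of taking `a` and then
following `σ`, weighted by `S^i(h|β)` without normalization, so that it is defined (and zero) also
where `S^i(I_i^j|β) = 0`. -/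
def cfValue (i : Fin G.n) (β σ : G.Profile) (j a : ℕ) : ℝ :=
  ∑ h ∈ G.Info i j, G.Sh i β h * G.uExpFrom i σ (h ++ [a])

theorem PerfectRecall.uExp_replace_sub_uExp_replace (hPR : G.PerfectRecall) (i : Fin G.n)
    (β : G.Profile) (b bt : ℕ → ℕ → ℝ) :
    G.uExp i (G.replace β i b) - G.uExp i (G.replace β i bt) =
      ∑ j ∈ Finset.range (G.m i), realizationWeight i b j *
        ∑ a ∈ G.infoA i j, (b j a - bt j a) * cfValue i β (G.replace β i bt) j a := by
  rw [uExp_sub_uExp, ← Finset.sum_filter_of_ne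
    (p := fun h => G.P h = some i ∧ ∃ a, h ++ [a] ∈ G.H), ← sum_range_sum_Info]
  · refine Finset.sum_congr rfl fun j hj => ?_
    have hj := Finset.mem_range.1 hj
    simp only [cfValue, Finset.mul_sum]
    rw [Finset.sum_comm (s := G.infoA i j)]
    refine Finset.sum_congr rfl fun h hh => ?_
    obtain ⟨_, hP, _, hI⟩ := (G.info_spec i j h hj).1 hh
    rw [A_eq_infoA hj hh, hPR.omega_replace_eq hj β b hh]
    refine Finset.sum_congr rfl fun a _ => ?_
    rw [moveProb_replace_of_eq β b a hP, moveProb_replace_of_eq β bt a hP, hI]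
    ring
  · intro h _ hne
    obtain ⟨a, ha, hterm⟩ := Finset.exists_ne_zero_of_sum_ne_zero (right_ne_zero_of_mul hne)
    refine ⟨?_, a, mem_A.1 ha⟩
    by_contra hP
    simp [moveProb_replace_of_ne _ _ _ hP] at hterm

end PerformanceDifference

section BestReplies

variable {β : G.Profile} {b bt : ℕ → ℕ → ℝ}

theorem PerfectRecall.uExp_replace_le_of_supportedOnArgmax (hPR : G.PerfectRecall)
    (hb : G.IsBehStrategy i b) (hbt : G.IsBehStrategy i bt)
    (hopt : ∀ j < G.m i, SupportedOnArgmax (G.infoA i j) (bt j)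
      (cfValue i β (G.replace β i bt) j)) :
    G.uExp i (G.replace β i b) ≤ G.uExp i (G.replace β i bt) := by
  rw [← sub_nonpos, hPR.uExp_replace_sub_uExp_replace]
  refine Finset.sum_nonpos fun j hj => ?_
  have hj := Finset.mem_range.1 hj
  refine mul_nonpos_of_nonneg_of_nonpos (hb.realizationWeight_nonneg hj) ?_
  simp only [sub_mul, Finset.sum_sub_distrib, sub_nonpos]
  exact (hopt j hj).sum_mul_le (hb j hj).1 ((hb j hj).2.trans (hbt j hj).2.symm)

theorem PerfectRecall.le_uExp_replace_of_supportedOnArgmax (hPR : G.PerfectRecall)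
    (hb : G.IsBehStrategy i b) (hbt : G.IsBehStrategy i bt)
    (hopt : ∀ j < G.m i, 0 < realizationWeight i b j →
      SupportedOnArgmax (G.infoA i j) (b j) (cfValue i β (G.replace β i bt) j)) :
    G.uExp i (G.replace β i bt) ≤ G.uExp i (G.replace β i b) := by
  rw [← sub_nonneg, hPR.uExp_replace_sub_uExp_replace]
  refine Finset.sum_nonneg fun j hj => ?_
  have hj := Finset.mem_range.1 hj
  rcases (hb.realizationWeight_nonneg hj).eq_or_lt with hzero | hpos
  · rw [← hzero, zero_mul]
  · refine mul_nonneg hpos.le ?_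
    simp only [sub_mul, Finset.sum_sub_distrib, sub_nonneg]
    exact (hopt j hj hpos).sum_mul_le (hbt j hj).1 ((hbt j hj).2.trans (hb j hj).2.symm)

end BestReplies

section ActionValues

theorem PerfectRecall.sum_Zset_filter_mem (hPR : G.PerfectRecall) (hj : j < G.m i) {a : ℕ}
    (haj : a ∈ G.infoA i j) (f : List ℕ → ℝ) :
    ∑ z ∈ G.Zset with a ∈ z, f z =
      ∑ h ∈ G.Info i j, ∑ z ∈ G.Zset with h ++ [a] <+: z, f z := by
  rw [← Finset.sum_biUnion]
  · refine Finset.sum_congr ?_ fun _ _ => rfl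
    ext z
    simp only [Finset.mem_filter, Finset.mem_biUnion]
    constructor
    · rintro ⟨hz, ha⟩
      obtain ⟨h, hh, hpre⟩ :=
        exists_concat_prefix_of_mem hj (Finset.mem_filter.1 hz).1 ha haj
      exact ⟨h, hh, hz, hpre⟩
    · rintro ⟨h, _, hz, hpre⟩
      exact ⟨hz, hpre.subset (by simp)⟩
  · refine fun g hg h hh hne => Finset.disjoint_filter.2 fun z _ hgz hhz => hne ?_
    have hgz := (List.prefix_append g [a]).trans hgz
    have hhz := (List.prefix_append h [a]).trans hhz
    rcases List.prefix_or_prefix_of_prefix hgz hhz with hpre | hpre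
    · exact hPR.eq_of_prefix hj hg hh hpre
    · exact (hPR.eq_of_prefix hj hh hg hpre).symm

theorem PerfectRecall.sum_Zset_filter_mem_mul (hPR : G.PerfectRecall) (hj : j < G.m i) {a : ℕ}
    (haj : a ∈ G.infoA i j) (σ : G.Profile) {W w : List ℕ → ℝ}
    (hW : ∀ h ∈ G.Info i j, ∀ r, h ++ a :: r ∈ G.H →
      W (h ++ a :: r) = w h * G.prodAlong σ (h ++ [a]) r) :
    ∑ z ∈ G.Zset with a ∈ z, G.u i z * W z =
      ∑ h ∈ G.Info i j, w h * G.uExpFrom i σ (h ++ [a]) := by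
  rw [hPR.sum_Zset_filter_mem hj haj]
  refine Finset.sum_congr rfl fun h hh => ?_
  rw [uExpFrom, Finset.mul_sum]
  refine Finset.sum_congr rfl fun z hz => ?_
  obtain ⟨hZ, r, rfl⟩ := Finset.mem_filter.1 hz
  have hWr := hW h hh r (by simpa using (Finset.mem_filter.1 hZ).1)
  rw [List.drop_left, List.append_assoc, List.singleton_append, hWr]
  ring

theorem PerfectRecall.uWedgeAct_rho (hPR : G.PerfectRecall) (hj : j < G.m i) (β βt : G.Profile)
    {a : ℕ} (haj : a ∈ G.infoA i j) :
    G.uWedgeAct i j a (G.rho i j β βt) =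
      realizationWeight i (β i) j * cfValue i β (G.replace β i (βt i)) j a := by
  have hω : ∀ h ∈ G.Info i j, G.omega β h = realizationWeight i (β i) j * G.Sh i β h :=
    fun h hh => by rw [← hPR.omega_replace_eq hj β (β i) hh, replace_self]
  rw [uWedgeAct, cfValue, Finset.mul_sum,
    hPR.sum_Zset_filter_mem_mul hj haj (G.replace β i (βt i)) (w := G.omega β)]
  · exact Finset.sum_congr rfl fun h hh => by rw [hω h hh, mul_assoc]
  · intro h hh r hH
    rw [hPR.prodAlongSkip_nil_append_cons hj _ hh, hPR.omega_rho hj β βt hh,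
      hPR.prodAlong_rho hj β βt (by simpa using hH) (by simp) haj]

theorem PerfectRecall.SInfo_mul_uCond_rho (hPR : G.PerfectRecall) (hj : j < G.m i)
    {β : G.Profile} (βt : G.Profile) {μ : G.Belief} (hμ : G.SelfIndep β μ) {a : ℕ}
    (haj : a ∈ G.infoA i j) :
    G.SInfo i j β * G.uCond i j a (G.rho i j β βt) μ =
      cfValue i β (G.replace β i (βt i)) j a := by
  rw [uCond, cfValue,
    hPR.sum_Zset_filter_mem_mul hj haj (G.replace β i (βt i)) (w := μ i j), Finset.mul_sum]
  · exact Finset.sum_congr rfl fun h hh => by rw [← hμ i j hj h hh, mul_assoc]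
  · intro h hh r hH
    rw [hPR.nu_append_cons hj _ _ hh,
      hPR.prodAlong_rho hj β βt (by simpa using hH) (by simp) haj]

end ActionValues

section NashChar

variable {β βt : G.Profile} {μ : G.Belief}

theorem NashChar.supportedOnArgmax_of_realizationWeight_pos (hchar : G.NashChar β βt μ)
    (hPR : G.PerfectRecall) (hj : j < G.m i) (hpos : 0 < realizationWeight i (β i) j) :
    SupportedOnArgmax (G.infoA i j) (β i j) (cfValue i β (G.replace β i (βt i)) j) := by
  have hβopt : SupportedOnArgmax (G.infoA i j) (β i j)
      fun a => G.uWedgeAct i j a (G.rho i j β βt) := hchar.1 i j hj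
  refine hβopt.of_lt_imp_lt fun a' h' a'' h'' hlt => ?_
  rw [hPR.uWedgeAct_rho hj β βt h', hPR.uWedgeAct_rho hj β βt h'']
  exact mul_lt_mul_of_pos_left hlt hpos

theorem NashChar.supportedOnArgmax_tilde (hchar : G.NashChar β βt μ) (hPR : G.PerfectRecall)
    (hβ : G.IsBehProfile β) (hj : j < G.m i) :
    SupportedOnArgmax (G.infoA i j) (βt i j) (cfValue i β (G.replace β i (βt i)) j) := by
  obtain ⟨_, hβt, _, hμ⟩ := hchar
  have hβtopt : SupportedOnArgmax (G.infoA i j) (βt i j)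
      fun a => G.uCond i j a (G.rho i j β βt) μ := hβt i j hj
  refine hβtopt.of_lt_imp_lt fun a' h' a'' h'' hlt => ?_
  rw [← hPR.SInfo_mul_uCond_rho hj βt hμ h', ← hPR.SInfo_mul_uCond_rho hj βt hμ h''] at hlt
  exact lt_of_mul_lt_mul_left hlt (hβ.SInfo_nonneg hj)

end NashChar

end EFG

/-- If `(β*, β̃*, μ*)` satisfies the Nash characterization, then `β*` is a Nash equilibrium
in behavioral strategies. -/
theorem stmt3 (G : EFG) (hPR : G.PerfectRecall)
    (β βt : G.Profile) (μ : G.Belief)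
    (hβ : G.IsBehProfile β) (hβt : G.IsBehProfile βt)
    (hchar : G.NashChar β βt μ) :
    ∀ (i : Fin G.n) (b : ℕ → ℕ → ℝ), G.IsBehStrategy i b →
      G.uExp i (G.replace β i b) ≤ G.uExp i β := by
  intro i b hb
  calc G.uExp i (G.replace β i b)
    _ ≤ G.uExp i (G.replace β i (βt i)) :=
        hPR.uExp_replace_le_of_supportedOnArgmax hb (hβt i) fun _ hj =>
          hchar.supportedOnArgmax_tilde hPR hβ hj
    _ ≤ G.uExp i (G.replace β i (β i)) :=
        hPR.le_uExp_replace_of_supportedOnArgmax (hβ i) (hβt i) fun _ hj hpos =>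
          hchar.supportedOnArgmax_of_realizationWeight_pos hPR hj hpos
    _ = G.uExp i β := by rw [EFG.replace_self]
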